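/- Let g ∈ H²(Ω) with Ω = ℝ⁺ × 𝕋². Then there exists a constant C > 0 (independent of g) such that ‖g‖_{L^∞(Ω)} ≤ √2 ‖g‖_{L²(Ω)}^{1/2} ‖∇g‖_{L²(Ω)}^{1/2} + C ‖∇g‖_{L²(Ω)}^{1/2} ‖∇²g‖_{L²(Ω)}^{1/2}. -/

import Mathlib

open MeasureTheory Set

noncomputable section

/-- Ambient space `ℝ³` (coordinates: `x 0` normal direction, `x 1, x 2` periodic). -/
abbrev E3 := EuclideanSpace ℝ (Fin 3)

/-- Coordinate unit vectors. -/
noncomputable def e (i : Fin 3) : E3 := EuclideanSpace.single i 1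

/-- The domain `Ω = ℝ⁺ × 𝕋²`, realized as a half-line times a fundamental square. -/
def Omega : Set E3 := {x | 0 < x 0 ∧ x 1 ∈ Ico (0 : ℝ) 1 ∧ x 2 ∈ Ico (0 : ℝ) 1}

/-- Measurable identification of `ℝ × ℝ × ℝ` with `E3`. -/
def Phi : ℝ × ℝ × ℝ ≃ᵐ E3 := 
  ((MeasurableEquiv.refl ℝ).prodCongr (MeasurableEquiv.finTwoArrow (α := ℝ)).symm).trans
  (((MeasurableEquiv.piFinSuccAbove (fun _ : Fin 3 => ℝ) 0).symm).trans (MeasurableEquiv.toLp 2 (Fin 3 → ℝ)))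

lemma Phi_apply (w : ℝ × ℝ × ℝ) : Phi w = !₂[w.1, w.2.1, w.2.2] := by
  ext i
  fin_cases i <;> rfl

lemma Phi_mp : MeasurePreserving Phi volume volume := by
  have h1 := EuclideanSpace.volume_preserving_symm_measurableEquiv_toLp (Fin 3)
  have h2 := volume_preserving_piFinSuccAbove (fun _ : Fin 3 => ℝ) 0
  have h3 := volume_preserving_finTwoArrow ℝ
  have h4 := (MeasurePreserving.id (volume : Measure ℝ)).prod (h3.symm)
  have h5 := (h1.symm).comp ((h2.symm).comp h4)
  exact h5

lemma Phi_cont : Continuous Phi := by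
  have : (Phi : ℝ × ℝ × ℝ → E3) = fun w => !₂[w.1, w.2.1, w.2.2] := funext Phi_apply
  rw [this]
  refine (PiLp.continuous_toLp 2 _).comp ?_
  refine continuous_pi fun i => ?_
  fin_cases i <;> simp <;> fun_prop

/-- boxes -/
def Bx (t L : ℝ) : Set E3 := {y | y 0 ∈ Ico t (t+L) ∧ y 1 ∈ Ico (0:ℝ) 1 ∧ y 2 ∈ Ico (0:ℝ) 1}

abbrev Tq : Set (ℝ × ℝ) := Ico (0:ℝ) 1 ×ˢ Ico (0:ℝ) 1

lemma Phi_pre (t L : ℝ) : Phi ⁻¹' (Bx t L) = Ico t (t+L) ×ˢ Tq := by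
  ext ⟨a, b, c⟩
  simp [Bx, Phi_apply]

lemma Bx_meas (t L : ℝ) : MeasurableSet (Bx t L) := by
  have h : MeasurableSet (Phi ⁻¹' (Bx t L)) := by
    rw [Phi_pre]; exact measurableSet_Ico.prod (measurableSet_Ico.prod measurableSet_Ico)
  exact (MeasurableEquiv.measurableSet_preimage Phi).1 h

lemma Bx_sub_compact (t L : ℝ) : ∃ K : Set E3, IsCompact K ∧ Bx t L ⊆ K := by
  refine ⟨Phi '' (Icc t (t+L) ×ˢ (Icc (0:ℝ) 1 ×ˢ Icc (0:ℝ) 1)), (isCompact_Icc.prod (isCompact_Icc.prod isCompact_Icc)).image Phi_cont, ?_⟩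
  intro y hy
  refine ⟨Phi.symm y, ?_, by simp⟩
  have : Phi.symm y ∈ Phi ⁻¹' (Bx t L) := by simpa using hy
  rw [Phi_pre] at this
  exact ⟨Ico_subset_Icc_self this.1, Ico_subset_Icc_self this.2.1, Ico_subset_Icc_self this.2.2⟩

lemma Bx_vol (t L : ℝ) (hL : 0 ≤ L) : volume.real (Bx t L) = L := by
  rw [measureReal_def, ← Phi_mp.measure_preimage (Bx_meas t L).nullMeasurableSet, Phi_pre]
  simp [Measure.volume_eq_prod, Measure.prod_prod, hL]

lemma Bx_fin (t L : ℝ) : volume (Bx t L) < ⊤ := by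
  obtain ⟨K, hK, h⟩ := Bx_sub_compact t L
  exact (measure_mono h).trans_lt hK.measure_lt_top

lemma Bx_int {F : Type*} [NormedAddCommGroup F] {φ : E3 → F} (hφ : Continuous φ) (t L : ℝ) : IntegrableOn φ (Bx t L) := by
  obtain ⟨K, hK, h⟩ := Bx_sub_compact t L
  exact (hφ.continuousOn.integrableOn_compact hK).mono_set h

lemma Bx_int2 {φ : E3 → ℝ} (hφ : Continuous φ) (t L : ℝ) :
    IntegrableOn (fun w => φ (Phi w)) (Ico t (t+L) ×ˢ Tq) (volume.prod volume) := by
  have hK : IsCompact (Icc t (t+L) ×ˢ (Icc (0:ℝ) 1 ×ˢ Icc (0:ℝ) 1)) := (isCompact_Icc.prod (isCompact_Icc.prod isCompact_Icc))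
  have := (hφ.comp Phi_cont).continuousOn.integrableOn_compact (μ := (volume : Measure (ℝ × ℝ × ℝ))) hK
  refine this.mono_set ?_
  exact prod_mono Ico_subset_Icc_self (prod_mono Ico_subset_Icc_self Ico_subset_Icc_self)

lemma Bx_integral {φ : E3 → ℝ} (hφ : Continuous φ) (t L : ℝ) :
    ∫ y in Bx t L, φ y = ∫ a in Ico t (t+L), ∫ w in Tq, φ (Phi (a, w)) := by
  rw [← Phi_mp.setIntegral_preimage_emb Phi.measurableEmbedding, Phi_pre]
  exact setIntegral_prod _ (Bx_int2 hφ t L)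

lemma Bx_integral' {φ : E3 → ℝ} (hφ : Continuous φ) (t L : ℝ) :
    ∫ y in Bx t L, φ y = ∫ w in Tq, ∫ a in Ico t (t+L), φ (Phi (a, w)) := by
  rw [Bx_integral hφ]
  refine integral_integral_swap ?_
  have := Bx_int2 hφ t L
  rwa [IntegrableOn, ← Measure.prod_restrict] at this

lemma Tq_integral {ψ : ℝ × ℝ → ℝ} (hψ : Continuous ψ) :
    ∫ w in Tq, ψ w = ∫ b in (0:ℝ)..1, ∫ c in (0:ℝ)..1, ψ (b, c) := by
  have : IntegrableOn ψ Tq (volume.prod volume) := by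
    have hK : IsCompact (Icc (0:ℝ) 1 ×ˢ Icc (0:ℝ) 1) := (isCompact_Icc.prod isCompact_Icc)
    refine (hψ.continuousOn.integrableOn_compact (μ := (volume : Measure (ℝ × ℝ))) hK).mono_set ?_
    exact prod_mono Ico_subset_Icc_self Ico_subset_Icc_self
  have h2 := setIntegral_prod ψ this
  rw [show (volume : Measure (ℝ × ℝ)) = volume.prod volume from rfl, h2]
  simp only [intervalIntegral.integral_of_le zero_le_one, integral_Ico_eq_integral_Ioc]

lemma shift_aux {f : ℝ → ℝ} (hf : Function.Periodic f 1) (s : ℝ) :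
    ∫ c in (0:ℝ)..1, f (s + c) = ∫ c in (0:ℝ)..1, f c := by
  rw [intervalIntegral.integral_comp_add_left (f := f)]
  have := hf.intervalIntegral_add_eq s 0
  simpa using this

lemma per_integral {φ : E3 → ℝ} (hφ : Continuous φ) (h1 : ∀ x, φ (x + e 1) = φ x)
    (h2 : ∀ x, φ (x + e 2) = φ x) (x : E3) :
    ∫ z in Bx 0 1, φ (x + z) = ∫ z in Bx 0 1, φ (EuclideanSpace.single 0 (x 0) + z) := by
  have hc : ∀ x : E3, Continuous fun z => φ (x + z) := fun x => hφ.comp (by fun_prop)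
  rw [Bx_integral (hc x), Bx_integral (hc _)]
  congr 1
  ext a
  have hc' : ∀ x : E3, Continuous fun w : ℝ × ℝ => φ (x + Phi (a, w)) := fun x =>
    (hc x).comp (Phi_cont.comp (by fun_prop))
  rw [Tq_integral (hc' x), Tq_integral (hc' _)]
  have key : ∀ b c, φ (x + Phi (a, b, c)) = φ (Phi (x 0 + a, x 1 + b, x 2 + c)) := by
    intro b c
    congr 1
    ext i
    fin_cases i <;> simp [Phi_apply]
  have key2 : ∀ b c, φ (EuclideanSpace.single 0 (x 0) + Phi (a, b, c)) = φ (Phi (x 0 + a, b, c)) := by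
    intro b c
    congr 1
    ext i
    fin_cases i <;> simp [Phi_apply]
  simp only [key, key2]
  have p2 : ∀ b, Function.Periodic (fun c => φ (Phi (x 0 + a, b, c))) 1 := by
    intro b c
    simp only
    rw [← h2 (Phi (x 0 + a, b, c))]
    congr 1
    ext i
    fin_cases i <;> simp [Phi_apply, e]
  have p1 : Function.Periodic (fun b => ∫ c in (0:ℝ)..1, φ (Phi (x 0 + a, b, c))) 1 := by
    intro b
    simp only
    congr 1
    ext c
    rw [← h1 (Phi (x 0 + a, b, c))]
    congr 1
    ext i
    fin_cases i <;> simp [Phi_apply, e]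
  simp only [fun b => shift_aux (p2 b) (x 2)]
  exact shift_aux p1 (x 1)

lemma per_le {φ : E3 → ℝ} (hφ : Continuous φ) (h0 : ∀ x, 0 ≤ φ x) (h1 : ∀ x, φ (x + e 1) = φ x)
    (h2 : ∀ x, φ (x + e 2) = φ x) (hi : IntegrableOn φ Omega) (x : E3) (hx : 0 < x 0) :
    ∫ z in Bx 0 1, φ (x + z) ≤ ∫ y in Omega, φ y := by
  rw [per_integral hφ h1 h2]
  set v : E3 := EuclideanSpace.single 0 (x 0)
  have hmp : MeasurePreserving (fun z : E3 => v + z) volume volume := measurePreserving_add_left volume v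
  have hpre : Bx 0 1 = (fun z : E3 => v + z) ⁻¹' (Bx (x 0) 1) := by
    ext z
    simp [Bx, v]
  rw [hpre, hmp.setIntegral_preimage_emb (measurableEmbedding_addLeft v) φ]
  refine setIntegral_mono_set hi (Filter.Eventually.of_forall h0) (LE.le.eventuallyLE ?_)
  intro y hy
  exact ⟨hx.trans_le hy.1.1, hy.2⟩

lemma scale_le {φ : E3 → ℝ} (hφ : Continuous φ) (h0 : ∀ x, 0 ≤ φ x) (h1 : ∀ x, φ (x + e 1) = φ x)
    (h2 : ∀ x, φ (x + e 2) = φ x) (hi : IntegrableOn φ Omega) (x : E3) (hx : 0 < x 0) {s : ℝ} (hs : 0 < s)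
    (hs1 : s ≤ 1) :
    ∫ z in Bx 0 1, φ (x + s • z) ≤ (s ^ 3)⁻¹ * ∫ y in Omega, φ y := by
  rw [Measure.setIntegral_comp_smul_of_pos volume (fun z => φ (x + z)) _ hs]
  simp only [finrank_euclideanSpace, Fintype.card_fin, smul_eq_mul]
  gcongr
  refine le_trans ?_ (per_le hφ h0 h1 h2 hi x hx)
  refine setIntegral_mono_set (Bx_int (hφ.comp (by fun_prop)) 0 1) (Filter.Eventually.of_forall fun z => h0 _) (LE.le.eventuallyLE ?_)
  rintro _ ⟨z, ⟨⟨ha, ha'⟩, ⟨hb, hb'⟩, ⟨hc, hc'⟩⟩, rfl⟩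
  simp only [zero_add] at ha'
  have aux : ∀ u : ℝ, 0 ≤ u → u < 1 → s * u ∈ Ico (0:ℝ) 1 := fun u h h' => ⟨by positivity, by nlinarith⟩
  simpa [Bx] using ⟨aux _ ha ha', aux _ hb hb', aux _ hc hc'⟩

lemma sq_int_le {φ : E3 → ℝ} (hφ : Continuous φ) :
    (∫ z in Bx 0 1, φ z) ^ 2 ≤ ∫ z in Bx 0 1, (φ z) ^ 2 := by
  set m := ∫ z in Bx 0 1, φ z
  have h : 0 ≤ ∫ z in Bx 0 1, (φ z - m) ^ 2 := integral_nonneg fun z => sq_nonneg _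
  have i1 : IntegrableOn φ (Bx 0 1) := Bx_int hφ 0 1
  have i2 : IntegrableOn (fun z => φ z ^ 2) (Bx 0 1) := Bx_int (hφ.pow 2) 0 1
  have : ∫ z in Bx 0 1, (φ z - m) ^ 2 = (∫ z in Bx 0 1, φ z ^ 2) - 2 * m * m + m ^ 2 := by
    have e1 : ∀ z, (φ z - m) ^ 2 = φ z ^ 2 - 2 * m * φ z + m ^ 2 := fun z => by ring
    simp only [e1]
    have i3 : IntegrableOn (fun z => φ z ^ 2 - 2 * m * φ z) (Bx 0 1) := i2.sub (i1.const_mul _)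
    rw [integral_add i3 (integrableOn_const (Bx_fin 0 1).ne), integral_sub i2 (i1.const_mul _), integral_const_mul,
      setIntegral_const, Bx_vol 0 1 zero_le_one]
    simp [m]
  nlinarith

lemma l1_le {φ : E3 → ℝ} (hφ : Continuous φ) (h1 : ∀ x, φ (x + e 1) = φ x)
    (h2 : ∀ x, φ (x + e 2) = φ x) (hi : IntegrableOn (fun x => φ x ^ 2) Omega) (x : E3) (hx : 0 < x 0) {s : ℝ} (hs : 0 < s)
    (hs1 : s ≤ 1) :
    ∫ z in Bx 0 1, φ (x + s • z) ≤ s ^ (-(3/2) : ℝ) * √(∫ y in Omega, φ y ^ 2) := by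
  have a1 := scale_le (hφ.pow 2) (fun x => sq_nonneg _) (fun x => by simp [h1]) (fun x => by simp [h2]) hi x hx hs hs1
  have a2 := sq_int_le (φ := fun z => φ (x + s • z)) (hφ.comp (by fun_prop))
  have : (s ^ (-(3/2) : ℝ)) ^ 2 = (s^3)⁻¹ := by
    rw [← Real.rpow_natCast, ← Real.rpow_mul hs.le, ← Real.rpow_natCast, ← Real.rpow_neg hs.le]
    norm_num
  refine le_of_sq_le_sq ?_ (by positivity)
  rw [mul_pow, this, Real.sq_sqrt (setIntegral_nonneg_of_ae (Filter.Eventually.of_forall fun x => sq_nonneg _))]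
  exact a2.trans a1

lemma cnorm2 {X : Type*} [TopologicalSpace X] {F : Type*} [NormedAddCommGroup F] [NormedSpace ℝ F]
    {f : X → (E3 →L[ℝ] F)} (h : Continuous f) : Continuous fun x => ‖f x‖ := h.norm

lemma nsub2 {F : Type*} [NormedAddCommGroup F] [NormedSpace ℝ F] (a b : E3 →L[ℝ] F) :
    ‖a - b‖ ≤ ‖a‖ + ‖b‖ := norm_sub_le a b


lemma swap_int {ψ : ℝ → E3 → ℝ} (hψ : Continuous (Function.uncurry ψ)) {a b : ℝ} (hab : a ≤ b) :
    ∫ z in Bx 0 1, ∫ s in a..b, ψ s z = ∫ s in a..b, ∫ z in Bx 0 1, ψ s z := by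
  simp only [intervalIntegral.integral_of_le hab]
  refine integral_integral_swap ?_
  rw [Measure.prod_restrict]
  obtain ⟨K, hK, hKs⟩ := Bx_sub_compact 0 1
  have : Continuous (Function.uncurry fun z s => ψ s z) := hψ.comp continuous_swap
  exact (this.continuousOn.integrableOn_compact (hK.prod (isCompact_Icc (a := a) (b := b)))).mono_set
    (prod_mono hKs Ioc_subset_Icc_self)

lemma swap_ii {ψ : ℝ → E3 → ℝ} (hψ : Continuous (Function.uncurry ψ)) {a b : ℝ} (hab : a ≤ b) :
    IntervalIntegrable (fun s => ∫ z in Bx 0 1, ψ s z) volume a b := by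
  rw [intervalIntegrable_iff_integrableOn_Ioc_of_le hab]
  obtain ⟨K, hK, hKs⟩ := Bx_sub_compact 0 1
  have := (hψ.continuousOn.integrableOn_compact (μ := (volume.prod volume)) ((isCompact_Icc (a := a) (b := b)).prod hK)).mono_set
    (prod_mono Ioc_subset_Icc_self hKs)
  rw [IntegrableOn, ← Measure.prod_restrict] at this
  exact this.integral_prod_left

lemma Bx_norm {z : E3} (hz : z ∈ Bx 0 1) : ‖z‖ ≤ 2 := by
  obtain ⟨⟨a, a'⟩, ⟨b, b'⟩, ⟨c, c'⟩⟩ := hz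
  have h := EuclideanSpace.norm_sq_eq z
  simp only [Fin.sum_univ_three, Real.norm_eq_abs, sq_abs] at h
  nlinarith [norm_nonneg z]

lemma hda {F : Type*} [NormedAddCommGroup F] [NormedSpace ℝ F] {f : E3 → F} (h : Differentiable ℝ f) (x z : E3) (s : ℝ) :
    HasDerivAt (fun s : ℝ => f (x + s • z)) (fderiv ℝ f (x + s • z) z) s := by
  have h1 : HasDerivAt (fun s : ℝ => x + s • z) z s := by
    simpa using ((hasDerivAt_id s).smul_const z).const_add x
  exact (h _).hasFDerivAt.comp_hasDerivAt s h1

lemma pt_bound {d : E3 → ℝ} (hd : ContDiff ℝ 2 d) (x z : E3) (hz : ‖z‖ ≤ 2) {r : ℝ} (hr : 0 < r) (hr1 : r ≤ 1) :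
    |d x - d (x + z)| ≤ 2 * (∫ s in r..1, ‖fderiv ℝ d (x + s • z)‖) + 2 * r * ‖fderiv ℝ d (x + r • z)‖
      + 4 * ∫ s in (0:ℝ)..r, s * ‖fderiv ℝ (fderiv ℝ d) (x + s • z)‖ := by
  have hd1 : Differentiable ℝ d := hd.differentiable (by norm_num)
  have hdd : ContDiff ℝ 1 (fderiv ℝ d) := hd.fderiv_right (by norm_num)
  have hd2 : Differentiable ℝ (fderiv ℝ d) := hdd.differentiable (by norm_num)
  have c1 : Continuous (fderiv ℝ d) := hdd.continuous
  have c2 : Continuous (fderiv ℝ (fderiv ℝ d)) := hdd.continuous_fderiv (by norm_num)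
  have cl : Continuous fun s : ℝ => x + s • z := by fun_prop
  have k1 : Continuous fun s : ℝ => fderiv ℝ d (x + s • z) := c1.comp cl
  have k2 : Continuous fun s : ℝ => fderiv ℝ (fderiv ℝ d) (x + s • z) := c2.comp cl
  have k1' : Continuous fun s : ℝ => fderiv ℝ d (x + s • z) z := by fun_prop
  have k2' : Continuous fun s : ℝ => s * fderiv ℝ (fderiv ℝ d) (x + s • z) z z := by fun_prop
  have k3 : Continuous fun s : ℝ => 4 * (s * ‖fderiv ℝ (fderiv ℝ d) (x + s • z)‖) := continuous_const.mul (continuous_id.mul (cnorm2 k2))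
  have h' : ∀ s : ℝ, HasDerivAt (fun s : ℝ => fderiv ℝ d (x + s • z) z) (fderiv ℝ (fderiv ℝ d) (x + s • z) z z) s := by
    intro s
    have := (hda hd2 x z s).clm_apply (hasDerivAt_const s z)
    simpa using this
  have f1 : ∫ s in r..1, fderiv ℝ d (x + s • z) z = d (x + z) - d (x + r • z) := by
    rw [intervalIntegral.integral_eq_sub_of_hasDerivAt (fun s _ => hda hd1 x z s) (k1'.intervalIntegrable _ _)]
    simp
  have f2 : ∫ s in (0:ℝ)..r, s * fderiv ℝ (fderiv ℝ d) (x + s • z) z z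
      = r * fderiv ℝ d (x + r • z) z - d (x + r • z) + d x := by
    rw [intervalIntegral.integral_eq_sub_of_hasDerivAt (f := fun s => s * fderiv ℝ d (x + s • z) z - d (x + s • z)) (fun s _ => ?_) (k2'.intervalIntegrable _ _)]
    · simp
    · refine (((hasDerivAt_id s).mul (h' s)).sub (hda hd1 x z s)).congr_deriv ?_
      simp only [id]
      ring
  have e1 : |∫ s in r..1, fderiv ℝ d (x + s • z) z| ≤ 2 * (∫ s in r..1, ‖fderiv ℝ d (x + s • z)‖) := by
    refine (intervalIntegral.abs_integral_le_integral_abs hr1).trans ?_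
    rw [← intervalIntegral.integral_const_mul]
    refine intervalIntegral.integral_mono_on hr1 (k1'.abs.intervalIntegrable _ _) ((continuous_const.mul k1.norm).intervalIntegrable _ _) fun s _ => ?_
    refine ((fderiv ℝ d (x + s • z)).le_opNorm z).trans ?_
    nlinarith [norm_nonneg (fderiv ℝ d (x + s • z))]
  have e2 : |∫ s in (0:ℝ)..r, s * fderiv ℝ (fderiv ℝ d) (x + s • z) z z| ≤ 4 * ∫ s in (0:ℝ)..r, s * ‖fderiv ℝ (fderiv ℝ d) (x + s • z)‖ := by
    refine (intervalIntegral.abs_integral_le_integral_abs hr.le).trans ?_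
    rw [← intervalIntegral.integral_const_mul]
    refine intervalIntegral.integral_mono_on hr.le (k2'.abs.intervalIntegrable _ _) (k3.intervalIntegrable _ _) fun s hs => ?_
    rw [abs_mul, abs_of_nonneg hs.1]
    have := (fderiv ℝ (fderiv ℝ d) (x + s • z)).le_opNorm₂ z z
    rw [Real.norm_eq_abs] at this
    have h4 : ‖fderiv ℝ (fderiv ℝ d) (x + s • z)‖ * ‖z‖ * ‖z‖ ≤ ‖fderiv ℝ (fderiv ℝ d) (x + s • z)‖ * 2 * 2 := by gcongr
    nlinarith [mul_le_mul_of_nonneg_left (this.trans h4) hs.1]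
  have e3 : |r * fderiv ℝ d (x + r • z) z| ≤ 2 * r * ‖fderiv ℝ d (x + r • z)‖ := by
    rw [abs_mul, abs_of_pos hr]
    have := (fderiv ℝ d (x + r • z)).le_opNorm z
    rw [Real.norm_eq_abs] at this
    have h4 : ‖fderiv ℝ d (x + r • z)‖ * ‖z‖ ≤ ‖fderiv ℝ d (x + r • z)‖ * 2 := by gcongr
    nlinarith [mul_le_mul_of_nonneg_left (this.trans h4) hr.le]
  have : d x - d (x + z) = (∫ s in (0:ℝ)..r, s * fderiv ℝ (fderiv ℝ d) (x + s • z) z z)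
    - r * fderiv ℝ d (x + r • z) z - ∫ s in r..1, fderiv ℝ d (x + s • z) z := by
    rw [f1, f2]; ring
  rw [this]
  rw [abs_le] at *
  constructor <;> linarith [e1.1, e1.2, e2.1, e2.2, e3.1, e3.2]

lemma par_int {ψ : ℝ → E3 → ℝ} (hψ : Continuous (Function.uncurry ψ)) (a b : ℝ) :
    IntegrableOn (fun z => ∫ s in a..b, ψ s z) (Bx 0 1) := by
  have h : Continuous (Function.uncurry fun (z : E3) (s : ℝ) => ψ s z) := hψ.comp continuous_swap
  exact Bx_int (intervalIntegral.continuous_parametric_intervalIntegral_of_continuous' h _ _) 0 1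

lemma d_core {d : E3 → ℝ} {N1 N2 : E3 → ℝ} (hd : Continuous d) (c1 : Continuous N1) (c2 : Continuous N2) (x : E3) {A B : ℝ} 
    (hA : ∀ s : ℝ, 0 < s → s ≤ 1 → ∫ z in Bx 0 1, N1 (x + s • z) ≤ s ^ (-(3/2) : ℝ) * A)
    (hB : ∀ s : ℝ, 0 < s → s ≤ 1 → ∫ z in Bx 0 1, N2 (x + s • z) ≤ s ^ (-(3/2) : ℝ) * B)
    (h0 : ∫ z in Bx 0 1, d (x + z) = 0) (hA0 : 0 ≤ A) {r : ℝ} (hr : 0 < r) (hr1 : r ≤ 1)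
    (hpt : ∀ z ∈ Bx 0 1, |d x - d (x + z)| ≤ 2 * (∫ s in r..1, N1 (x + s • z)) + 2 * r * N1 (x + r • z)
      + 4 * ∫ s in (0:ℝ)..r, s * N2 (x + s • z)) :
    |d x| ≤ 6 * A / √r + 8 * B * √r := by
  have j1 : Continuous (Function.uncurry fun (s : ℝ) (z : E3) => N1 (x + s • z)) :=
    c1.comp (by fun_prop : Continuous fun p : ℝ × E3 => x + p.1 • p.2)
  have j2 : Continuous (Function.uncurry fun (s : ℝ) (z : E3) => s * N2 (x + s • z)) :=
    have k : Continuous fun p : ℝ × E3 => N2 (x + p.1 • p.2) := c2.comp (by fun_prop)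
    continuous_fst.mul k
  have i1 : IntegrableOn (fun z => ∫ s in r..1, N1 (x + s • z)) (Bx 0 1) := par_int j1 _ _
  have i2 : IntegrableOn (fun z => ∫ s in (0:ℝ)..r, s * N2 (x + s • z)) (Bx 0 1) := par_int j2 _ _
  have i3 : IntegrableOn (fun z => N1 (x + r • z)) (Bx 0 1) :=
    Bx_int (c1.comp (by fun_prop : Continuous fun z : E3 => x + r • z)) 0 1
  have i4 : IntegrableOn (fun z => d (x + z)) (Bx 0 1) :=
    Bx_int (hd.comp (by fun_prop : Continuous fun z : E3 => x + z)) 0 1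
  have i5 : IntegrableOn (fun _ : E3 => d x) (Bx 0 1) := integrableOn_const (Bx_fin 0 1).ne
  have s1 : d x = ∫ z in Bx 0 1, (d x - d (x + z)) := by
    rw [integral_sub i5 i4, h0, setIntegral_const, Bx_vol 0 1 zero_le_one]; simp
  have i12 : IntegrableOn (fun z => 2 * (∫ s in r..1, N1 (x + s • z)) + 2 * r * N1 (x + r • z)) (Bx 0 1) :=
    (i1.const_mul 2).add (i3.const_mul _)
  have s2 : |d x| ≤ ∫ z in Bx 0 1, (2 * (∫ s in r..1, N1 (x + s • z)) + 2 * r * N1 (x + r • z)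
      + 4 * ∫ s in (0:ℝ)..r, s * N2 (x + s • z)) := by
    conv_lhs => rw [s1]
    refine (abs_integral_le_integral_abs).trans ?_
    refine setIntegral_mono_on (i5.sub i4).abs (i12.add (i2.const_mul _)) (Bx_meas 0 1) fun z hz => ?_
    exact hpt z hz
  rw [integral_add i12 (i2.const_mul _), integral_add (i1.const_mul 2) (i3.const_mul _), integral_const_mul, integral_const_mul,
    integral_const_mul, swap_int (ψ := fun s z => N1 (x + s • z)) j1 hr1, swap_int (ψ := fun s z => s * N2 (x + s • z)) j2 hr.le] at s2
  have hsr : r ^ (-(1/2) : ℝ) = 1 / √r := by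
    rw [Real.rpow_neg hr.le, ← Real.sqrt_eq_rpow, one_div]
  have hsr2 : r * r ^ (-(3/2) : ℝ) = 1 / √r := by
    rw [← hsr, ← Real.rpow_one_add' hr.le (by norm_num)]; norm_num
  have t1 : ∫ s in r..1, ∫ z in Bx 0 1, N1 (x + s • z) ≤ 2 * A / √r := by
    have q : IntervalIntegrable (fun s : ℝ => s ^ (-(3/2) : ℝ) * A) volume r 1 := by
      refine (intervalIntegral.intervalIntegrable_rpow (Or.inr ?_)).mul_const _
      rw [uIcc_of_le hr1]; simp [hr]
    refine (intervalIntegral.integral_mono_on hr1 (swap_ii j1 hr1) q fun s hs => hA s (hr.trans_le hs.1) hs.2).trans ?_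
    rw [intervalIntegral.integral_mul_const, integral_rpow (Or.inr ⟨by norm_num, by rw [uIcc_of_le hr1]; simp [hr]⟩)]
    rw [show (-(3/2) : ℝ) + 1 = -(1/2) by norm_num, hsr, Real.one_rpow]
    have : 0 < √r := Real.sqrt_pos.2 hr
    have : 2 * A / √r = 2 * A * (1 / √r) := by ring
    rw [this]
    nlinarith
  have t2 : ∫ s in (0:ℝ)..r, ∫ z in Bx 0 1, s * N2 (x + s • z) ≤ 2 * B * √r := by
    have q : IntervalIntegrable (fun s : ℝ => s ^ (-(1/2) : ℝ) * B) volume 0 r := by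
      exact (intervalIntegral.intervalIntegrable_rpow' (by norm_num)).mul_const _
    refine (intervalIntegral.integral_mono_on_of_le_Ioo hr.le (swap_ii j2 hr.le) q fun s hs => ?_).trans ?_
    · rw [integral_const_mul]
      refine (mul_le_mul_of_nonneg_left (hB s hs.1 (hs.2.le.trans hr1)) hs.1.le).trans (le_of_eq ?_)
      rw [← mul_assoc, ← Real.rpow_one_add' hs.1.le (by norm_num)]; norm_num
    rw [intervalIntegral.integral_mul_const, integral_rpow (Or.inl (by norm_num))]
    rw [show (-(1/2) : ℝ) + 1 = (1/2) by norm_num, ← Real.sqrt_eq_rpow, Real.zero_rpow (by norm_num)]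
    apply le_of_eq; ring
  have t3 := mul_le_mul_of_nonneg_left (hA r hr hr1) hr.le
  rw [← mul_assoc, hsr2] at t3
  have : 6 * A / √r = 2 * (2 * A / √r) + 2 * (1 / √r * A) := by ring
  rw [this]
  nlinarith

lemma d_bound {d : E3 → ℝ} (hd : ContDiff ℝ 2 d) (x : E3) {A B : ℝ}
    (hA : ∀ s : ℝ, 0 < s → s ≤ 1 → ∫ z in Bx 0 1, ‖fderiv ℝ d (x + s • z)‖ ≤ s ^ (-(3/2) : ℝ) * A)
    (hB : ∀ s : ℝ, 0 < s → s ≤ 1 → ∫ z in Bx 0 1, ‖fderiv ℝ (fderiv ℝ d) (x + s • z)‖ ≤ s ^ (-(3/2) : ℝ) * B)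
    (h0 : ∫ z in Bx 0 1, d (x + z) = 0) (hA0 : 0 ≤ A) {r : ℝ} (hr : 0 < r) (hr1 : r ≤ 1) :
    |d x| ≤ 6 * A / √r + 8 * B * √r := by
  have hdd : ContDiff ℝ 1 (fderiv ℝ d) := hd.fderiv_right (by norm_num)
  have c1 : Continuous (fderiv ℝ d) := hdd.continuous
  have c2 : Continuous (fderiv ℝ (fderiv ℝ d)) := hdd.continuous_fderiv (by norm_num)
  exact d_core (N1 := fun y => ‖fderiv ℝ d y‖) (N2 := fun y => ‖fderiv ℝ (fderiv ℝ d) y‖) hd.continuous (cnorm2 c1) (cnorm2 c2)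
    x hA hB h0 hA0 hr hr1 fun z hz => pt_bound hd x z (Bx_norm hz) hr hr1

lemma trans_core {D N : E3 → ℝ} (hD : Continuous D) (hN : Continuous N) {x v : E3} {s M : ℝ}
    (pw : ∀ y : E3, D y ≤ 2 * ∫ τ in (0:ℝ)..1, N (y + τ • v))
    (hM : ∀ τ : ℝ, ∫ z in Bx 0 1, N (x + τ • v + s • z) ≤ M) :
    ∫ z in Bx 0 1, D (x + s • z) ≤ 2 * M := by
  have j : Continuous (Function.uncurry fun (τ : ℝ) (z : E3) => N (x + τ • v + s • z)) :=
    hN.comp (by fun_prop : Continuous fun p : ℝ × E3 => x + p.1 • v + s • p.2)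
  have i1 : IntegrableOn (fun z => D (x + s • z)) (Bx 0 1) := Bx_int (hD.comp (by fun_prop)) 0 1
  have h3 := setIntegral_mono_on i1 ((par_int j 0 1).const_mul 2) (Bx_meas 0 1) (fun z _ => by
    have := pw (x + s • z)
    simp only [add_right_comm x (s • z)] at this
    exact this)
  refine h3.trans ?_
  rw [integral_const_mul, swap_int j zero_le_one]
  have := intervalIntegral.integral_mono_on zero_le_one (swap_ii j zero_le_one) (intervalIntegrable_const (c := M))
    (fun τ _ => hM τ)
  rw [intervalIntegral.integral_const] at this
  simp only [sub_zero, one_smul] at this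
  linarith

lemma sum_core {D N : E3 → ℝ} (hD : Continuous D) (hN : Continuous N) {x v : E3} {s M : ℝ}
    (pw : ∀ y : E3, D y ≤ N (y + v) + N y)
    (hM : ∫ z in Bx 0 1, N (x + s • z) ≤ M) (hM2 : ∫ z in Bx 0 1, N (x + v + s • z) ≤ M) :
    ∫ z in Bx 0 1, D (x + s • z) ≤ 2 * M := by
  have i1 : IntegrableOn (fun z => D (x + s • z)) (Bx 0 1) := Bx_int (hD.comp (by fun_prop)) 0 1
  have i2 : IntegrableOn (fun z => N (x + s • z)) (Bx 0 1) := Bx_int (hN.comp (by fun_prop)) 0 1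
  have i3 : IntegrableOn (fun z => N (x + v + s • z)) (Bx 0 1) := Bx_int (hN.comp (by fun_prop)) 0 1
  have h3 := setIntegral_mono_on i1 (i3.add i2) (Bx_meas 0 1) (fun z _ => by
    have := pw (x + s • z)
    simp only [add_right_comm x (s • z)] at this
    exact this)
  have h4 := integral_add i3 i2
  simp only [Pi.add_apply] at h3
  linarith

lemma alg_opt {P Q X : ℝ} (hP : 0 ≤ P) (hQ : 0 ≤ Q) (h : ∀ ρ : ℝ, 0 < ρ → X ≤ P / ρ + Q * ρ) :
    X ≤ 2 * (√P * √Q) := by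
  rcases hP.eq_or_lt with rfl | hP
  · by_contra! hX
    simp only [Real.sqrt_zero, zero_mul, mul_zero] at hX
    have := h (X / (Q + 1)) (by positivity)
    have h2 : Q * (X / (Q + 1)) < X := by
      rw [← mul_div_assoc, div_lt_iff₀ (by positivity)]; nlinarith
    simp only [zero_div, zero_add] at this
    linarith
  rcases hQ.eq_or_lt with rfl | hQ
  · by_contra! hX
    simp only [Real.sqrt_zero, mul_zero] at hX
    have := h ((P + 1) / X) (by positivity)
    have h2 : P / ((P + 1) / X) < X := by
      rw [div_div_eq_mul_div, div_lt_iff₀ (by positivity)]; nlinarith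
    simp only [zero_mul, add_zero] at this
    linarith
  have p := Real.sqrt_pos.2 hP
  have q := Real.sqrt_pos.2 hQ
  refine (h (√P / √Q) (by positivity)).trans (le_of_eq ?_)
  have e1 : P / (√P / √Q) = √P * √Q := by
    rw [div_div_eq_mul_div, div_eq_iff p.ne']
    nlinarith [Real.mul_self_sqrt hP.le]
  have e2 : Q * (√P / √Q) = √P * √Q := by
    rw [← mul_div_assoc, div_eq_iff q.ne']
    nlinarith [Real.mul_self_sqrt hQ.le]
  rw [e1, e2]; ring

lemma fderiv_per {F : Type*} [NormedAddCommGroup F] [NormedSpace ℝ F] {f : E3 → F} {v : E3}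
    (h : ∀ x, f (x + v) = f x) (x : E3) : fderiv ℝ f (x + v) = fderiv ℝ f x := by
  rw [← fderiv_comp_add_right v]
  simp only [h]

lemma fderiv_diff {F : Type*} [NormedAddCommGroup F] [NormedSpace ℝ F] {f : E3 → F} (hf : Differentiable ℝ f) (v : E3) :
    fderiv ℝ (fun y => f (y + v) - f y) = fun y => fderiv ℝ f (y + v) - fderiv ℝ f y := by
  ext1 y
  rw [fderiv_fun_sub _ (hf y), fderiv_comp_add_right]
  exact (hf _).comp y (by fun_prop)

lemma sqrt2_norm {v : E3} (h0 : v 0 = 0) (h1 : |v 1| ≤ 1) (h2 : |v 2| ≤ 1) : ‖v‖ ≤ 2 := by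
  have h := EuclideanSpace.norm_sq_eq v
  simp only [Fin.sum_univ_three, Real.norm_eq_abs, h0] at h
  have := abs_nonneg (v 1)
  have := abs_nonneg (v 2)
  simp only [abs_zero] at h
  nlinarith [norm_nonneg v]

set_option maxHeartbeats 1000000 in
lemma trans_bound {g : E3 → ℝ} (hg : ContDiff ℝ 2 g)
    (p1 : ∀ x : E3, g (x + e 1) = g x) (p2 : ∀ x : E3, g (x + e 2) = g x)
    (hi1 : IntegrableOn (fun x => ‖fderiv ℝ g x‖ ^ 2) Omega)
    (hi2 : IntegrableOn (fun x => ‖fderiv ℝ (fderiv ℝ g) x‖ ^ 2) Omega)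
    (x v : E3) (hx : 0 < x 0) (hv0 : v 0 = 0) (hv : ‖v‖ ≤ 2) :
    |g (x + v) - g x| ≤ 32 * (√√(∫ y in Omega, ‖fderiv ℝ g y‖ ^ 2)
      * √√(∫ y in Omega, ‖fderiv ℝ (fderiv ℝ g) y‖ ^ 2)) := by
  set A := √(∫ y in Omega, ‖fderiv ℝ g y‖ ^ 2)
  set B := √(∫ y in Omega, ‖fderiv ℝ (fderiv ℝ g) y‖ ^ 2)
  have hA : 0 ≤ A := Real.sqrt_nonneg _
  have hB : 0 ≤ B := Real.sqrt_nonneg _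
  have hd1 : Differentiable ℝ g := hg.differentiable (by norm_num)
  have hdd : ContDiff ℝ 1 (fderiv ℝ g) := hg.fderiv_right (by norm_num)
  have hd2 : Differentiable ℝ (fderiv ℝ g) := hdd.differentiable (by norm_num)
  have c1 : Continuous (fderiv ℝ g) := hdd.continuous
  have c2 : Continuous (fderiv ℝ (fderiv ℝ g)) := hdd.continuous_fderiv (by norm_num)
  have n1 : Continuous fun y => ‖fderiv ℝ g y‖ := cnorm2 c1
  have n2 : Continuous fun y => ‖fderiv ℝ (fderiv ℝ g) y‖ := cnorm2 c2
  have q1 := fderiv_per p1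
  have q2 := fderiv_per p2
  have bA : ∀ x : E3, 0 < x 0 → ∀ s : ℝ, 0 < s → s ≤ 1 → ∫ z in Bx 0 1, ‖fderiv ℝ g (x + s • z)‖ ≤ s ^ (-(3/2) : ℝ) * A :=
    fun x hx s hs hs1 => l1_le n1 (fun y => by rw [q1]) (fun y => by rw [q2]) hi1 x hx hs hs1
  have bB : ∀ x : E3, 0 < x 0 → ∀ s : ℝ, 0 < s → s ≤ 1 → ∫ z in Bx 0 1, ‖fderiv ℝ (fderiv ℝ g) (x + s • z)‖ ≤ s ^ (-(3/2) : ℝ) * B :=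
    fun x hx s hs hs1 => l1_le n2 (fun y => by rw [fderiv_per q1]) (fun y => by rw [fderiv_per q2]) hi2 x hx hs hs1
  have ca : ∀ (x : E3) (s : ℝ), Continuous fun z : E3 => x + s • z := fun x s => by fun_prop
  have hxv : ∀ τ : ℝ, 0 < (x + τ • v) 0 := fun τ => by simpa [hv0] using hx
  have hxv1 : 0 < (x + v) 0 := by simpa [hv0] using hx
  set d : E3 → ℝ := fun y => g (y + v) - g y with hd
  have hdC : ContDiff ℝ 2 d := (hg.comp (contDiff_id.add contDiff_const)).sub hg
  have D1 : fderiv ℝ d = fun y => fderiv ℝ g (y + v) - fderiv ℝ g y := fderiv_diff hd1 v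
  have D2 : fderiv ℝ (fderiv ℝ d) = fun y => fderiv ℝ (fderiv ℝ g) (y + v) - fderiv ℝ (fderiv ℝ g) y := by
    rw [D1]; exact fderiv_diff hd2 v
  have dc1 : Continuous fun y => ‖fderiv ℝ d y‖ := by
    have : ContDiff ℝ 1 (fderiv ℝ d) := hdC.fderiv_right (by norm_num)
    exact cnorm2 this.continuous
  have dc2 : Continuous fun y => ‖fderiv ℝ (fderiv ℝ d) y‖ := by
    have : ContDiff ℝ 1 (fderiv ℝ d) := hdC.fderiv_right (by norm_num)
    exact cnorm2 (this.continuous_fderiv (by norm_num))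
  have comm : ∀ (s : ℝ) (z : E3), x + s • z + v = x + v + s • z := fun s z => by abel
  have hB' : ∀ s : ℝ, 0 < s → s ≤ 1 → ∫ z in Bx 0 1, ‖fderiv ℝ (fderiv ℝ d) (x + s • z)‖ ≤ s ^ (-(3/2) : ℝ) * (2 * B) := by
    intro s hs hs1
    have := sum_core (v := v) dc2 n2 (fun y => by rw [D2]; exact nsub2 _ _) (bB x hx s hs hs1) (bB (x + v) hxv1 s hs hs1)
    linarith
  have hA1 : ∀ s : ℝ, 0 < s → s ≤ 1 → ∫ z in Bx 0 1, ‖fderiv ℝ d (x + s • z)‖ ≤ s ^ (-(3/2) : ℝ) * (2 * A) := by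
    intro s hs hs1
    have := sum_core (v := v) dc1 n1 (fun y => by rw [D1]; exact nsub2 _ _) (bA x hx s hs hs1) (bA (x + v) hxv1 s hs hs1)
    linarith
  have hA2 : ∀ s : ℝ, 0 < s → s ≤ 1 → ∫ z in Bx 0 1, ‖fderiv ℝ d (x + s • z)‖ ≤ s ^ (-(3/2) : ℝ) * (2 * B) := by
    intro s hs hs1
    have cv : ∀ y : E3, Continuous fun τ : ℝ => fderiv ℝ (fderiv ℝ g) (y + τ • v) := fun y => c2.comp (by fun_prop)
    have pw : ∀ y : E3, ‖fderiv ℝ d y‖ ≤ 2 * ∫ τ in (0:ℝ)..1, ‖fderiv ℝ (fderiv ℝ g) (y + τ • v)‖ := by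
      intro y
      have cv' : Continuous fun τ : ℝ => fderiv ℝ (fderiv ℝ g) (y + τ • v) v := (cv y).clm_apply continuous_const
      have f1 : ∫ τ in (0:ℝ)..1, fderiv ℝ (fderiv ℝ g) (y + τ • v) v = fderiv ℝ d y := by
        rw [intervalIntegral.integral_eq_sub_of_hasDerivAt (fun τ _ => hda hd2 y v τ) (cv'.intervalIntegrable _ _), D1]
        simp
      rw [← f1, ← intervalIntegral.integral_const_mul]
      refine (intervalIntegral.norm_integral_le_integral_norm zero_le_one).trans ?_
      refine intervalIntegral.integral_mono_on zero_le_one (cv'.norm.intervalIntegrable _ _)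
        ((continuous_const.mul (cnorm2 (cv y))).intervalIntegrable _ _) fun τ _ => ?_
      refine ((fderiv ℝ (fderiv ℝ g) (y + τ • v)).le_opNorm v).trans ?_
      nlinarith [norm_nonneg (fderiv ℝ (fderiv ℝ g) (y + τ • v))]
    have := trans_core dc1 n2 pw (fun τ => bB (x + τ • v) (hxv τ) s hs hs1)
    linarith
  have h0 : ∫ z in Bx 0 1, d (x + z) = 0 := by
    have cg : ∀ y : E3, Continuous fun z => g (y + z) := fun y => hg.continuous.comp (by fun_prop)
    have e1 : ∀ z, d (x + z) = g (x + v + z) - g (x + z) := fun z => by simp only [hd]; rw [add_right_comm]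
    simp only [e1]
    rw [integral_sub (Bx_int (cg _) 0 1) (Bx_int (cg _) 0 1), per_integral hg.continuous p1 p2 (x + v),
      per_integral hg.continuous p1 p2 x]
    simp [hv0]
  have hm : ∀ r : ℝ, 0 < r → r ≤ 1 → |d x| ≤ 6 * (2 * min A B) / √r + 8 * (2 * B) * √r := by
    intro r hr hr1
    refine d_bound hdC x (fun s hs hs1 => ?_) hB' h0 (by positivity) hr hr1
    rcases le_total A B with h | h
    · rw [min_eq_left h]; exact hA1 s hs hs1
    · rw [min_eq_right h]; exact hA2 s hs hs1
  have hm0 : 0 ≤ min A B := le_min hA hB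
  have hmB : min A B ≤ B := min_le_right _ _
  have fin : |d x| / 16 ≤ 2 * (√(min A B) * √B) := by
    refine alg_opt hm0 hB fun ρ hρ => ?_
    have base : ∀ ρ : ℝ, 0 < ρ → ρ ≤ 1 → |d x| / 16 ≤ min A B / ρ + B * ρ := by
      intro ρ hρ hρ1
      have := hm (ρ ^ 2) (by positivity) (by nlinarith)
      rw [Real.sqrt_sq hρ.le] at this
      have e1 : 6 * (2 * min A B) / ρ = 12 * (min A B / ρ) := by ring
      have e2 : 0 ≤ min A B / ρ := by positivity
      linarith
    rcases le_total ρ 1 with h | h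
    · exact base ρ hρ h
    · refine (base 1 one_pos le_rfl).trans ?_
      rw [div_one, mul_one]
      have e1 : min A B / ρ * ρ = min A B := by field_simp
      have e2 : min A B / ρ ≤ min A B := div_le_self hm0 h
      nlinarith
  have : √(min A B) ≤ √A := Real.sqrt_le_sqrt (min_le_left _ _)
  have h5 : √(min A B) * √B ≤ √A * √B := by gcongr
  linarith

lemma slice_bound {g : E3 → ℝ} (hg : ContDiff ℝ 2 g)
    (hi0 : IntegrableOn (fun x => (g x) ^ 2) Omega)
    (hi1 : IntegrableOn (fun x => ‖fderiv ℝ g x‖ ^ 2) Omega)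
    {t m : ℝ} (ht : 0 < t) (hm0 : 0 ≤ m) (hm : ∀ w ∈ Tq, m ≤ |g (Phi (t, w))|) :
    m ^ 2 ≤ 2 * (√(∫ y in Omega, (g y) ^ 2) * √(∫ y in Omega, ‖fderiv ℝ g y‖ ^ 2)) := by
  have hd1 : Differentiable ℝ g := hg.differentiable (by norm_num)
  have hdd : ContDiff ℝ 1 (fderiv ℝ g) := hg.fderiv_right (by norm_num)
  have n1 : Continuous fun y => ‖fderiv ℝ g y‖ := cnorm2 hdd.continuous
  have hgc := hg.continuous
  set I0 := ∫ y in Omega, (g y) ^ 2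
  set I1 := ∫ y in Omega, ‖fderiv ℝ g y‖ ^ 2
  have hI0 : 0 ≤ I0 := integral_nonneg fun _ => sq_nonneg _
  have hI1 : 0 ≤ I1 := integral_nonneg fun _ => sq_nonneg _
  have main : ∀ l : ℝ, 0 < l → ∀ L : ℝ, 0 < L → L * m ^ 2 ≤ I0 + L * (I0 / l + I1 * l) := by
    intro l hl L hL
    set ψ : E3 → ℝ := fun y => (1 / l) * (g y) ^ 2 + l * ‖fderiv ℝ g y‖ ^ 2 with hψ
    have cψ : Continuous ψ := by fun_prop
    have ψ0 : ∀ y, 0 ≤ ψ y := fun y => by positivity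
    set φ : E3 → ℝ := fun y => (g y) ^ 2 + L * ψ y with hφ
    have cφ : Continuous φ := by fun_prop
    have iψ : IntegrableOn ψ Omega := (hi0.const_mul _).add (hi1.const_mul _)
    have iφ : IntegrableOn φ Omega := hi0.add (iψ.const_mul _)
    have vφ : ∫ y in Omega, φ y = I0 + L * (I0 / l + I1 * l) := by
      simp only [hφ]
      rw [integral_add hi0 (iψ.const_mul _), integral_const_mul]
      simp only [hψ]
      rw [integral_add (hi0.const_mul _) (hi1.const_mul _), integral_const_mul, integral_const_mul]
      simp only [I0, I1]
      ring
    have sub : ∫ y in Bx t L, φ y ≤ ∫ y in Omega, φ y := by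
      refine setIntegral_mono_set iφ (Filter.Eventually.of_forall fun y => ?_) (LE.le.eventuallyLE ?_)
      · exact add_nonneg (sq_nonneg _) (mul_nonneg hL.le (ψ0 y))
      · intro y hy
        exact ⟨ht.trans_le hy.1.1, hy.2⟩
    rw [← vφ]
    refine le_trans ?_ sub
    rw [Bx_integral' cφ]
    have it : IntegrableOn (fun w => ∫ a in Ico t (t+L), φ (Phi (a, w))) Tq := by
      have := Bx_int2 cφ t L
      rw [IntegrableOn, ← Measure.prod_restrict] at this
      exact this.integral_prod_right
    have vT : volume.real Tq = 1 := by
      simp [measureReal_def, Tq, Measure.volume_eq_prod, Measure.prod_prod]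
    have fT : volume Tq ≠ ⊤ := by
      simp [Tq, Measure.volume_eq_prod, Measure.prod_prod]
    have : L * m ^ 2 = ∫ w in Tq, L * m ^ 2 := by
      rw [setIntegral_const, vT]; simp
    rw [this]
    refine setIntegral_mono_on (integrableOn_const fT) it (measurableSet_Ico.prod measurableSet_Ico) fun w hw => ?_
    have hline : ∀ s : ℝ, Phi (s, w) = Phi (0, w) + s • e 0 := by
      intro s
      ext i
      fin_cases i <;> simp [Phi_apply, e]
    have cline : Continuous fun s : ℝ => Phi (s, w) := Phi_cont.comp (by fun_prop)
    have kg : Continuous fun s => g (Phi (s, w)) := hgc.comp cline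
    have kψ : Continuous fun s => ψ (Phi (s, w)) := cψ.comp cline
    have kd : Continuous fun s => fderiv ℝ g (Phi (s, w)) (e 0) := (hdd.continuous.comp cline).clm_apply continuous_const
    have ne0 : ‖e 0‖ = 1 := by simp [e]
    have hder : ∀ s : ℝ, HasDerivAt (fun s => g (Phi (s, w)) ^ 2) (2 * g (Phi (s, w)) * fderiv ℝ g (Phi (s, w)) (e 0)) s := by
      intro s
      have := (hda hd1 (Phi (0, w)) (e 0) s).pow 2
      simp only [← hline] at this
      refine this.congr_deriv ?_
      simp
    have pw : ∀ τ ∈ Ico t (t + L), m ^ 2 ≤ g (Phi (τ, w)) ^ 2 + ∫ s in t..(t+L), ψ (Phi (s, w)) := by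
      intro τ hτ
      have k2 : Continuous fun s => 2 * g (Phi (s, w)) * fderiv ℝ g (Phi (s, w)) (e 0) := by fun_prop
      have f1 := intervalIntegral.integral_eq_sub_of_hasDerivAt (a := t) (b := τ) (fun s _ => hder s) (k2.intervalIntegrable _ _)
      have f2 : -(∫ s in t..τ, 2 * g (Phi (s, w)) * fderiv ℝ g (Phi (s, w)) (e 0)) ≤ ∫ s in t..τ, ψ (Phi (s, w)) := by
        rw [← intervalIntegral.integral_neg]
        refine intervalIntegral.integral_mono_on hτ.1 (k2.neg.intervalIntegrable _ _) (kψ.intervalIntegrable _ _) fun s _ => ?_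
        have a1 := (fderiv ℝ g (Phi (s, w))).le_opNorm (e 0)
        rw [ne0, mul_one, Real.norm_eq_abs] at a1
        have a2 : (fderiv ℝ g (Phi (s, w)) (e 0)) ^ 2 ≤ ‖fderiv ℝ g (Phi (s, w))‖ ^ 2 := by
          rw [← sq_abs]; gcongr
        have a3 : -(2 * g (Phi (s, w)) * fderiv ℝ g (Phi (s, w)) (e 0)) ≤ (1 / l) * g (Phi (s, w)) ^ 2 + l * (fderiv ℝ g (Phi (s, w)) (e 0)) ^ 2 := by
          have : (1 / l) * g (Phi (s, w)) ^ 2 + l * (fderiv ℝ g (Phi (s, w)) (e 0)) ^ 2 + 2 * g (Phi (s, w)) * fderiv ℝ g (Phi (s, w)) (e 0)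
            = (1 / l) * (g (Phi (s, w)) + l * fderiv ℝ g (Phi (s, w)) (e 0)) ^ 2 := by field_simp; ring
          have : 0 ≤ (1 / l) * (g (Phi (s, w)) + l * fderiv ℝ g (Phi (s, w)) (e 0)) ^ 2 := by positivity
          linarith
        have a4 := mul_le_mul_of_nonneg_left a2 hl.le
        simp only [hψ]
        linarith
      have f3 : ∫ s in t..τ, ψ (Phi (s, w)) ≤ ∫ s in t..(t+L), ψ (Phi (s, w)) :=
        intervalIntegral.integral_mono_interval le_rfl hτ.1 hτ.2.le (Filter.Eventually.of_forall fun s => ψ0 _) (kψ.intervalIntegrable _ _)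
      have f4 : m ^ 2 ≤ g (Phi (t, w)) ^ 2 := by
        rw [← sq_abs (g _)]; have := hm w hw; gcongr
      linarith
    have hle : t ≤ t + L := by linarith
    have kg2 : Continuous fun s => g (Phi (s, w)) ^ 2 := kg.pow 2
    have kψL : Continuous fun s => L * ψ (Phi (s, w)) := continuous_const.mul kψ
    have g1 : ∫ a in Ico t (t+L), φ (Phi (a, w)) = ∫ a in t..(t+L), φ (Phi (a, w)) := by
      rw [integral_Ico_eq_integral_Ioc, intervalIntegral.integral_of_le hle]
    have g2 : ∫ a in t..(t+L), φ (Phi (a, w)) = (∫ a in t..(t+L), g (Phi (a, w)) ^ 2) + L * ∫ a in t..(t+L), ψ (Phi (a, w)) := by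
      simp only [hφ]
      rw [intervalIntegral.integral_add (kg2.intervalIntegrable _ _) (kψL.intervalIntegrable _ _),
        intervalIntegral.integral_const_mul]
    have kg3 : Continuous fun τ => g (Phi (τ, w)) ^ 2 + ∫ s in t..(t+L), ψ (Phi (s, w)) := kg2.add continuous_const
    have g3 := intervalIntegral.integral_mono_on_of_le_Ioo (μ := volume) hle (intervalIntegrable_const (c := m ^ 2))
      (kg3.intervalIntegrable _ _) (fun τ hτ => pw τ ⟨hτ.1.le, hτ.2⟩)
    rw [intervalIntegral.integral_add (kg2.intervalIntegrable _ _) intervalIntegrable_const,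
      intervalIntegral.integral_const, intervalIntegral.integral_const] at g3
    simp only [add_sub_cancel_left, smul_eq_mul] at g3
    rw [g1, g2]
    exact g3
  refine alg_opt hI0 hI1 fun l hl => ?_
  have := alg_opt (X := m ^ 2 - (I0 / l + I1 * l)) hI0 le_rfl (fun L hL => by
    have := main l hl L hL
    have h2 : L * (m ^ 2 - (I0 / l + I1 * l)) ≤ I0 := by linarith
    rw [zero_mul, add_zero, le_div_iff₀ hL]
    linarith)
  simp only [Real.sqrt_zero, mul_zero] at this
  linarith

/-- Gagliardo–Nirenberg type inequality on `Ω = ℝ⁺ × 𝕋²`: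
`‖g‖_{L^∞} ≤ √2 ‖g‖^{1/2} ‖∇g‖^{1/2} + C ‖∇g‖^{1/2} ‖∇²g‖^{1/2}`. -/
theorem stmt2 : ∃ C > 0, ∀ g : E3 → ℝ,
    ContDiff ℝ 2 g →
    (∀ x : E3, g (x + e 1) = g x) → (∀ x : E3, g (x + e 2) = g x) →
    IntegrableOn (fun x => (g x) ^ 2) Omega →
    IntegrableOn (fun x => ‖fderiv ℝ g x‖ ^ 2) Omega →
    IntegrableOn (fun x => ‖fderiv ℝ (fderiv ℝ g) x‖ ^ 2) Omega →
    ∀ x ∈ Omega, |g x| ≤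
      Real.sqrt 2 * Real.sqrt (Real.sqrt (∫ y in Omega, (g y) ^ 2))
        * Real.sqrt (Real.sqrt (∫ y in Omega, ‖fderiv ℝ g y‖ ^ 2))
      + C * Real.sqrt (Real.sqrt (∫ y in Omega, ‖fderiv ℝ g y‖ ^ 2))
          * Real.sqrt (Real.sqrt (∫ y in Omega, ‖fderiv ℝ (fderiv ℝ g) y‖ ^ 2)) := by
  refine ⟨32, by norm_num, ?_⟩
  intro g hg p1 p2 hi0 hi1 hi2 x hx
  set K := √√(∫ y in Omega, ‖fderiv ℝ g y‖ ^ 2) * √√(∫ y in Omega, ‖fderiv ℝ (fderiv ℝ g) y‖ ^ 2) with hK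
  have hK0 : 0 ≤ K := by positivity
  rw [mul_assoc 32, ← hK]
  rcases le_total (|g x| - 32 * K) 0 with h | h
  · have : 0 ≤ Real.sqrt 2 * Real.sqrt (Real.sqrt (∫ y in Omega, (g y) ^ 2))
        * Real.sqrt (Real.sqrt (∫ y in Omega, ‖fderiv ℝ g y‖ ^ 2)) := by positivity
    linarith
  have := slice_bound hg hi0 hi1 hx.1 h (fun w hw => by
    obtain ⟨b, c⟩ := w
    obtain ⟨hx0, hx1, hx2⟩ := hx
    obtain ⟨hb, hc⟩ := hw
    simp only [mem_Ico] at hx1 hx2 hb hc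
    set v : E3 := Phi (x 0, b, c) - x with hv
    have v0 : v 0 = 0 := by simp [hv, Phi_apply]
    have v1 : v 1 = b - x 1 := by simp [hv, Phi_apply]
    have v2 : v 2 = c - x 2 := by simp [hv, Phi_apply]
    have hvn : ‖v‖ ≤ 2 := sqrt2_norm v0 (by rw [v1, abs_le]; constructor <;> linarith)
      (by rw [v2, abs_le]; constructor <;> linarith)
    have tb := trans_bound hg p1 p2 hi1 hi2 x v hx0 v0 hvn
    rw [← hK, show x + v = Phi (x 0, b, c) by simp [hv]] at tb
    have := abs_sub_abs_le_abs_sub (g x) (g (Phi (x 0, b, c)))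
    rw [abs_sub_comm] at this
    linarith)
  have h2 := Real.le_sqrt_of_sq_le this
  rw [Real.sqrt_mul (by norm_num), Real.sqrt_mul (Real.sqrt_nonneg _), ← mul_assoc] at h2
  linarith
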